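/- Let I ⊆ ℝ be an interval, φ : I → ℝ a convex C² function, and U = {x ∈ I : φ''(x) > 0}. Define Φ : I × I → ℝ² by Φ(x,y) = (x + y, φ(x) + φ(y)). Then: (a) Φ is injective on U²₊ = {(x,y) ∈ U × U : x < y}; (b) the Jacobian determinant of Φ is det Φ'(x,y) = φ'(y) − φ'(x), and it is strictly positive at every point of U²₊. -/

import Mathlib

open Set

/- If `(a, b)` and `(c, d)` have the same image and `a < c`, then `d < b`, and the slopes of `φ`
over `[a, c]` and `[d, b]` agree. Convexity puts `φ'(c)` above the first slope and `φ'(d)` below the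
second, so `φ'(d) ≤ φ'(c)`. Hence `Φ` is injective wherever its Jacobian determinant
`φ'(y) - φ'(x)` is positive. -/

/-- The map `Φ(x, y) = (x + y, φ(x) + φ(y))`, which adds the points of the graph of `φ` above `x`
and `y`. -/
def graphSum {R : Type*} [Add R] (φ : R → R) (p : R × R) : R × R :=
  (p.1 + p.2, φ p.1 + φ p.2)

section Jacobian

variable {𝕜 : Type*} [NontriviallyNormedField 𝕜] {φ : 𝕜 → 𝕜} {mx my x y : 𝕜}

theorem hasFDerivAt_graphSum (hx : HasDerivAt φ mx x) (hy : HasDerivAt φ my y) :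
    HasFDerivAt (graphSum φ)
      ((ContinuousLinearMap.fst 𝕜 𝕜 𝕜 + ContinuousLinearMap.snd 𝕜 𝕜 𝕜).prod
        (mx • ContinuousLinearMap.fst 𝕜 𝕜 𝕜 + my • ContinuousLinearMap.snd 𝕜 𝕜 𝕜)) (x, y) :=
  (hasFDerivAt_fst.add hasFDerivAt_snd).prodMk
    ((hx.comp_hasFDerivAt (x, y) hasFDerivAt_fst).add
      (hy.comp_hasFDerivAt (x, y) hasFDerivAt_snd))

theorem det_fderiv_graphSum (hx : DifferentiableAt 𝕜 φ x) (hy : DifferentiableAt 𝕜 φ y) :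
    LinearMap.det (fderiv 𝕜 (graphSum φ) (x, y) : (𝕜 × 𝕜) →ₗ[𝕜] (𝕜 × 𝕜)) =
      deriv φ y - deriv φ x := by
  rw [(hasFDerivAt_graphSum hx.hasDerivAt hy.hasDerivAt).fderiv,
    ← LinearMap.det_toMatrix (Module.Basis.finTwoProd 𝕜), Matrix.det_fin_two]
  simp [LinearMap.toMatrix_apply]

end Jacobian

theorem lt_of_monotoneOn_Icc_of_deriv_ne_zero {f : ℝ → ℝ} {x y : ℝ} (hxy : x < y)
    (hf : MonotoneOn f (Icc x y)) (hx : deriv f x ≠ 0) : f x < f y := by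
  have hxmem : x ∈ Icc x y := left_mem_Icc.2 hxy.le
  have hymem : y ∈ Icc x y := right_mem_Icc.2 hxy.le
  refine (hf hxmem hymem hxy.le).lt_of_ne fun heq => hx ?_
  have hconst : ∀ z ∈ Icc x y, f z = f x := fun z hz =>
    le_antisymm (heq ▸ hf hz hymem hz.2) (hf hxmem hz hz.1)
  have hzero : HasDerivWithinAt f 0 (Icc x y) x :=
    (hasDerivWithinAt_const x (Icc x y) (f x)).congr hconst rfl
  have hderiv : HasDerivWithinAt f (deriv f x) (Icc x y) x :=
    (differentiableAt_of_deriv_ne_zero hx).hasDerivAt.hasDerivWithinAt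
  exact (uniqueDiffOn_Icc hxy x hxmem).eq_deriv _ hderiv hzero

section Convex

variable {I : Set ℝ} {φ : ℝ → ℝ}

theorem deriv_lt_deriv_of_convexOn_of_deriv_deriv_ne_zero {x y : ℝ} (hφ : ConvexOn ℝ I φ)
    (hdiff : ∀ z ∈ I, DifferentiableAt ℝ φ z) (hx : x ∈ I) (hy : y ∈ I) (hxy : x < y)
    (hx' : deriv (deriv φ) x ≠ 0) : deriv φ x < deriv φ y :=
  lt_of_monotoneOn_Icc_of_deriv_ne_zero hxy
    ((hφ.monotoneOn_deriv hdiff).mono (hφ.1.ordConnected.out hx hy)) hx'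

theorem deriv_le_deriv_of_convexOn_of_add_eq_add {a b c d : ℝ} (hφ : ConvexOn ℝ I φ)
    (ha : a ∈ I) (hb : b ∈ I) (hc : c ∈ I) (hd : d ∈ I) (hac : a < c)
    (hφc : DifferentiableAt ℝ φ c) (hφd : DifferentiableAt ℝ φ d)
    (hsum : a + b = c + d) (hφsum : φ a + φ b = φ c + φ d) : deriv φ d ≤ deriv φ c := by
  have hdb : d < b := by linarith
  have hslope : slope φ d b = slope φ a c := by
    rw [slope_def_field, slope_def_field]
    congr 1 <;> linarith
  calc deriv φ d ≤ slope φ d b := hφ.deriv_le_slope hd hb hdb hφd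
    _ = slope φ a c := hslope
    _ ≤ deriv φ c := hφ.slope_le_deriv ha hc hac hφc

theorem injOn_graphSum_of_convexOn (hφ : ConvexOn ℝ I φ)
    (hdiff : ∀ z ∈ I, DifferentiableAt ℝ φ z) :
    InjOn (graphSum φ) {p | p.1 ∈ I ∧ p.2 ∈ I ∧ deriv φ p.1 < deriv φ p.2} := by
  rintro ⟨a, b⟩ ⟨ha, hb, hab⟩ ⟨c, d⟩ ⟨hc, hd, hcd⟩ heq
  obtain ⟨hsum, hφsum⟩ : a + b = c + d ∧ φ a + φ b = φ c + φ d := Prod.mk.inj heq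
  rcases lt_trichotomy a c with hac | rfl | hca
  · exact absurd hcd (deriv_le_deriv_of_convexOn_of_add_eq_add hφ ha hb hc hd hac
      (hdiff c hc) (hdiff d hd) hsum hφsum).not_gt
  · rw [add_left_cancel hsum]
  · exact absurd hab (deriv_le_deriv_of_convexOn_of_add_eq_add hφ hc hd ha hb hca
      (hdiff a ha) (hdiff b hb) hsum.symm hφsum.symm).not_gt

end Convex

theorem maximal_restriction_stmt13_general
    {I : Set ℝ} (hIopen : IsOpen I) {φ : ℝ → ℝ} (hφ : DifferentiableOn ℝ φ I)
    (hconv : ConvexOn ℝ I φ) {U : Set ℝ} (hU : U = {x ∈ I | 0 < deriv (deriv φ) x})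
    {Φ : ℝ × ℝ → ℝ × ℝ} (hΦ : ∀ p : ℝ × ℝ, Φ p = (p.1 + p.2, φ p.1 + φ p.2)) :
    InjOn Φ {p : ℝ × ℝ | p.1 ∈ U ∧ p.2 ∈ I ∧ p.1 < p.2} ∧
    (∀ x ∈ I, ∀ y ∈ I,
      LinearMap.det (fderiv ℝ Φ (x, y) : (ℝ × ℝ) →ₗ[ℝ] (ℝ × ℝ)) = deriv φ y - deriv φ x) ∧
    (∀ x ∈ U, ∀ y ∈ I, x < y →
      0 < LinearMap.det (fderiv ℝ Φ (x, y) : (ℝ × ℝ) →ₗ[ℝ] (ℝ × ℝ))) := by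
  obtain rfl : Φ = graphSum φ := funext hΦ
  subst hU
  have hdiff : ∀ x ∈ I, DifferentiableAt ℝ φ x := fun x hx =>
    hφ.differentiableAt (hIopen.mem_nhds hx)
  refine ⟨(injOn_graphSum_of_convexOn hconv hdiff).mono ?_,
    fun x hx y hy => det_fderiv_graphSum (hdiff x hx) (hdiff y hy), ?_⟩
  · rintro ⟨x, y⟩ ⟨⟨hx, hpos⟩, hy, hxy⟩
    exact ⟨hx, hy, deriv_lt_deriv_of_convexOn_of_deriv_deriv_ne_zero hconv hdiff hx hy hxy hpos.ne'⟩
  · rintro x ⟨hx, hpos⟩ y hy hxy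
    rw [det_fderiv_graphSum (hdiff x hx) (hdiff y hy), sub_pos]
    exact deriv_lt_deriv_of_convexOn_of_deriv_deriv_ne_zero hconv hdiff hx hy hxy hpos.ne'

/-- for a convex `C²` function `φ` on an open interval `I`, with
`U = {x ∈ I : φ''(x) > 0}`, the map `Φ(x,y) = (x + y, φ(x) + φ(y))` is injective on
`U²₊ = {(x,y) ∈ U × U : x < y}`; its Jacobian determinant at any `(x,y) ∈ I × I` equals
`φ'(y) − φ'(x)`, and this is strictly positive on `U²₊`. -/
theorem maximal_restriction_stmt13
    (I : Set ℝ) (hIopen : IsOpen I) (hIinterval : I.OrdConnected)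
    (φ : ℝ → ℝ) (hφ : ContDiffOn ℝ 2 φ I) (hconv : ConvexOn ℝ I φ)
    (U : Set ℝ) (hU : U = {x ∈ I | 0 < deriv (deriv φ) x})
    (Φ : ℝ × ℝ → ℝ × ℝ) (hΦ : ∀ p : ℝ × ℝ, Φ p = (p.1 + p.2, φ p.1 + φ p.2)) :
    Set.InjOn Φ {p : ℝ × ℝ | p.1 ∈ U ∧ p.2 ∈ U ∧ p.1 < p.2} ∧
    (∀ x ∈ I, ∀ y ∈ I,
      LinearMap.det (fderiv ℝ Φ (x, y) : (ℝ × ℝ) →ₗ[ℝ] (ℝ × ℝ)) = deriv φ y - deriv φ x) ∧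
    (∀ x ∈ U, ∀ y ∈ U, x < y →
      0 < LinearMap.det (fderiv ℝ Φ (x, y) : (ℝ × ℝ) →ₗ[ℝ] (ℝ × ℝ))) := by
  have hUI : U ⊆ I := hU ▸ sep_subset I _
  obtain ⟨hinj, hdet, hpos⟩ :=
    maximal_restriction_stmt13_general hIopen (hφ.differentiableOn two_ne_zero) hconv hU hΦ
  exact ⟨hinj.mono (ofPred_subset_ofPred.2 fun p hp => ⟨hp.1, hUI hp.2.1, hp.2.2⟩), hdet,
    fun x hx y hy => hpos x hx y (hUI hy)⟩
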